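/- arXiv:2402.03107 — 3 statements merged into one kernel-verified Lean document; each statement's English description precedes it below -/
import Mathlib

section
/- Let T be a set of permutation patterns of arbitrary lengths and let G be a finite nontrivial abelian group. Suppose there exists n_0 ∈ ℕ such that for every n ≥ n_0 the group ⟨S_n(T)⟩ is isomorphic to G. Then G is isomorphic to ℤ_2 (the cyclic group of order 2) or to ℤ_2 × ℤ_2 (the Klein four-group). -/
/-- A permutation `π ∈ S_n` contains the pattern `τ ∈ S_k` if there is a strictly
increasing `f : Fin k → Fin n` such that `τ a < τ b ↔ π (f a) < π (f b)`. -/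
def PermContains {k n : ℕ} (τ : Equiv.Perm (Fin k)) (π : Equiv.Perm (Fin n)) : Prop :=
  ∃ f : Fin k → Fin n, StrictMono f ∧ ∀ a b : Fin k, τ a < τ b ↔ π (f a) < π (f b)

/-- `avoidSet n T` is `S_n(T)`: the permutations of `Fin n` avoiding every pattern in `T`,
where `T` is a set of permutations of arbitrary lengths. -/
def avoidSet (n : ℕ) (T : Set (Σ k : ℕ, Equiv.Perm (Fin k))) : Set (Equiv.Perm (Fin n)) :=
  {π | ∀ τ ∈ T, ¬ PermContains τ.2 π}

/-!
Let `C n` be the class of permutations avoiding `T`. Commuting with an `n`-cycle forces a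
permutation into the cyclic group that it generates, so if all the cycles `finRotate n`, or all
their inverses, lie in `C`, then the group is eventually cyclic of order `n`.

Otherwise a member `π` of `C` with a long increasing subsequence has no inversion other than those
of its first two and its last two entries. Indeed, the excluded cycles leave only boundedly many
terms that are neither above and to the right of a given inversion nor below and to the left of it,
so up to symmetry many terms lie above and to the right. Together with any third entry, the
inversion then gives a pattern `α ⊕ 1` in `C` with `α ∈ S_3`. It commutes with `213 ⊕ 1`, so
`α = 213`, and hence the inversion stands at the first two places. By Erdős–Szekeres every long
member of `C` has a long increasing subsequence if some decreasing permutation is excluded. If none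
is, then all members commute with the reversal, and each long member has a long increasing
subsequence possibly after reversing its values. In both cases the long members lie in
`{1, a, b, a * b}` for commuting involutions `a`, `b`.
-/

open Equiv Filter

theorem exists_strictMonoOn_or_strictAntiOn {α β : Type*} [Fintype α] [LinearOrder α]
    [LinearOrder β] {f : α → β} (hf : Function.Injective f) {a b : ℕ}
    (hab : a * b < Fintype.card α) :
    (∃ S : Finset α, a < S.card ∧ StrictMonoOn f S) ∨
      ∃ S : Finset α, b < S.card ∧ StrictAntiOn f S := by
  classical
  by_contra! ⟨hinc, hdec⟩
  have hlongest : ∀ x, ∃ S : Finset α, (StrictMonoOn f S ∧ IsGreatest (S : Set α) x) ∧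
      ∀ S' : Finset α, StrictMonoOn f S' ∧ IsGreatest (S' : Set α) x → S'.card ≤ S.card := by
    intro x
    obtain ⟨S, hS, hmax⟩ := Finset.exists_max_image
      {S : Finset α | StrictMonoOn f S ∧ IsGreatest (S : Set α) x} Finset.card
      ⟨{x}, by simp⟩
    simp only [Finset.mem_filter_univ] at hS hmax
    exact ⟨S, hS, hmax⟩
  -- `longest x` is a longest increasing subsequence ending at `x`.
  choose longest hlongest hmax using hlongest
  have hpos : ∀ x, (longest x).card ∈ Finset.Icc 1 a := fun x =>
    Finset.mem_Icc.2 ⟨Finset.card_pos.2 ⟨x, (hlongest x).2.1⟩,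
      not_lt.1 fun h => hinc _ h (hlongest x).1⟩
  have hlt : ∀ x y, x < y → f x < f y → (longest x).card < (longest y).card := by
    intro x y hxy hfxy
    have hle : ∀ z ∈ longest x, z ≤ x := fun z hz => (hlongest x).2.2 hz
    have hy : y ∉ longest x := fun h => (hle y h).not_gt hxy
    rw [← Nat.add_one_le_iff, ← Finset.card_insert_of_notMem hy]
    refine hmax y _ ⟨?_, by simp, ?_⟩
    · rw [Finset.coe_insert,
        strictMonoOn_insert_iff_of_forall_le fun z hz => (hle z hz).trans hxy.le]
      exact ⟨fun z hz _ =>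
        ((hlongest x).1.monotoneOn hz (hlongest x).2.1 (hle z hz)).trans_lt hfxy, (hlongest x).1⟩
    · intro z hz
      rcases Finset.mem_insert.1 (Finset.mem_coe.1 hz) with rfl | hz
      · exact le_rfl
      · exact (hle z hz).trans hxy.le
  obtain ⟨l, -, hl⟩ := Finset.exists_lt_card_fiber_of_mul_lt_card_of_maps_to
    (s := Finset.univ) (t := Finset.Icc 1 a) (n := b) (fun x _ => hpos x) (by simpa using hab)
  refine hdec _ hl fun x hx y hy hxy => ?_
  simp only [Finset.coe_filter, Finset.mem_univ, true_and, Set.mem_ofPred_eq] at hx hy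
  by_contra! hle
  exact (hlt x y hxy (hle.lt_of_ne (hf.ne hxy.ne))).ne (hx.trans hy.symm)

theorem exists_perm_lt_iff {α : Type*} [LinearOrder α] {k : ℕ} {g : Fin k → α}
    (hg : Function.Injective g) : ∃ σ : Perm (Fin k), ∀ a b, σ a < σ b ↔ g a < g b := by
  have hsort : StrictMono (g ∘ Tuple.sort g) :=
    (Tuple.monotone_sort g).strictMono_of_injective (hg.comp (Tuple.sort g).injective)
  refine ⟨(Tuple.sort g).symm, fun a b => ?_⟩
  simp [← hsort.lt_iff_lt]

theorem PermContains.trans {k m n : ℕ} {ρ : Perm (Fin k)} {τ : Perm (Fin m)} {π : Perm (Fin n)}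
    (hρ : PermContains ρ τ) (hτ : PermContains τ π) : PermContains ρ π := by
  obtain ⟨f, hf, hρ⟩ := hρ
  obtain ⟨g, hg, hτ⟩ := hτ
  exact ⟨g ∘ f, hg.comp hf, fun a b => (hρ a b).trans (hτ _ _)⟩

theorem eq_one_of_forall_lt_le {n : ℕ} {π : Perm (Fin n)} (hπ : ∀ a b, a < b → π a ≤ π b) :
    π = 1 := by
  have hmono : StrictMono π := (monotone_iff_forall_lt.2 hπ).strictMono_of_injective π.injective
  exact Equiv.ext fun i => congrFun hmono.eq_id i

theorem permContains_revPerm {n m : ℕ} {π : Perm (Fin n)} {S : Finset (Fin n)}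
    (hS : StrictAntiOn π S) (hm : m ≤ S.card) :
    PermContains (Fin.revPerm : Perm (Fin m)) π := by
  refine ⟨S.orderEmbOfCardLe hm, (S.orderEmbOfCardLe hm).strictMono, fun a b => ?_⟩
  rw [hS.lt_iff_gt (S.orderEmbOfCardLe_mem hm a) (S.orderEmbOfCardLe_mem hm b)]
  simp

theorem permContains_finRotate {n m : ℕ} {π : Perm (Fin n)} {S : Finset (Fin n)} {p : Fin n}
    (hS : StrictMonoOn π S) (hm : m ≤ S.card) (hp : ∀ s ∈ S, s < p ∧ π p < π s) :
    PermContains (finRotate (m + 1)) π := by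
  set f := S.orderEmbOfCardLe hm
  have hf : ∀ i, f i ∈ S := S.orderEmbOfCardLe_mem hm
  have hcastSucc (i : Fin m) : finRotate (m + 1) i.castSucc = i.succ := by
    simp
  refine ⟨Fin.snoc f p, ?_, fun i j => ?_⟩
  · intro i j hij
    induction i using Fin.lastCases with
    | last => exact absurd hij (Fin.le_last j).not_gt
    | cast i =>
      induction j using Fin.lastCases with
      | last => simpa using (hp _ (hf i)).1
      | cast j => simpa using hij
  · induction i using Fin.lastCases <;> induction j using Fin.lastCases
    · simp
    · simpa [finRotate_last, hcastSucc] using (hp _ (hf _)).2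
    · simpa [finRotate_last, hcastSucc] using (hp _ (hf _)).2.le
    · simp [hcastSucc, hS.lt_iff_lt (hf _) (hf _)]

/-- The direct sum `σ ⊕ τ` of permutations. -/
def directSum {k m : ℕ} (σ : Perm (Fin k)) (τ : Perm (Fin m)) : Perm (Fin (k + m)) :=
  finSumFinEquiv.permCongr (sumCongr σ τ)

section DirectSum

variable {k m n : ℕ} {σ : Perm (Fin k)} {τ : Perm (Fin m)} {π : Perm (Fin n)}

theorem directSum_castAdd (i : Fin k) :
    directSum σ τ (i.castAdd m) = (σ i).castAdd m := by
  simp [directSum, permCongr_apply]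

theorem directSum_natAdd (i : Fin m) :
    directSum σ τ (i.natAdd k) = (τ i).natAdd k := by
  simp [directSum, permCongr_apply]

theorem directSum_mul_directSum (σ' : Perm (Fin k)) (τ' : Perm (Fin m)) :
    directSum σ τ * directSum σ' τ' = directSum (σ * σ') (τ * τ') := by
  ext i
  induction i using Fin.addCases <;> simp [directSum_castAdd, directSum_natAdd]

theorem directSum_left_injective :
    Function.Injective fun σ : Perm (Fin k) => directSum σ τ := by
  intro σ σ' h
  ext i
  simpa [directSum_castAdd] using congrArg Fin.val (DFunLike.congr_fun h (i.castAdd m))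

theorem castAdd_lt_natAdd (i : Fin k) (j : Fin m) : i.castAdd m < j.natAdd k :=
  i.isLt.trans_le (Nat.le_add_right k j)

theorem permContains_directSum {f : Fin k → Fin n} {g : Fin m → Fin n} (hf : StrictMono f)
    (hg : StrictMono g) (hσ : ∀ a b, σ a < σ b ↔ π (f a) < π (f b))
    (hτ : ∀ a b, τ a < τ b ↔ π (g a) < π (g b)) (hfg : ∀ a b, f a < g b ∧ π (f a) < π (g b)) :
    PermContains (directSum σ τ) π := by
  refine ⟨Fin.append f g, fun a b hab => ?_, fun a b => ?_⟩
  · induction a using Fin.addCases <;> induction b using Fin.addCases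
    · simpa only [Fin.append_left] using hf ((Fin.strictMono_castAdd m).lt_iff_lt.1 hab)
    · simpa only [Fin.append_left, Fin.append_right] using (hfg _ _).1
    · exact absurd hab (castAdd_lt_natAdd _ _).not_gt
    · simpa only [Fin.append_right] using hg ((Fin.natAdd_lt_natAdd_iff k).1 hab)
  · induction a using Fin.addCases <;> induction b using Fin.addCases <;>
      simp only [directSum_castAdd, directSum_natAdd, Fin.append_left, Fin.append_right]
    · exact (Fin.strictMono_castAdd m).lt_iff_lt.trans (hσ _ _)
    · exact iff_of_true (castAdd_lt_natAdd _ _) (hfg _ _).2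
    · exact iff_of_false (castAdd_lt_natAdd _ _).not_gt (hfg _ _).2.not_gt
    · exact (Fin.natAdd_lt_natAdd_iff k).trans (hτ _ _)

theorem strictMono_natAdd_succ : StrictMono fun j : Fin m => j.succ.natAdd k :=
  (Fin.strictMono_natAdd k).comp Fin.strictMono_succ

theorem permContains_directSum_one_succ (σ : Perm (Fin k)) :
    PermContains (directSum σ (1 : Perm (Fin m))) (directSum σ (1 : Perm (Fin (m + 1)))) := by
  refine permContains_directSum (f := Fin.castAdd (m + 1)) (Fin.strictMono_castAdd _)
    strictMono_natAdd_succ (fun i j => ?_) (fun i j => ?_) fun i j => ?_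
  · simp only [directSum_castAdd, (Fin.strictMono_castAdd (m + 1)).lt_iff_lt]
  · simp only [directSum_natAdd, Perm.one_apply, strictMono_natAdd_succ.lt_iff_lt]
  · simp only [directSum_castAdd, directSum_natAdd, castAdd_lt_natAdd, and_self]

theorem permContains_directSum_swap_one (hσ : σ ≠ 1) :
    PermContains (directSum (swap 0 1 : Perm (Fin 3)) (1 : Perm (Fin m)))
      (directSum σ (1 : Perm (Fin (m + 1)))) := by
  obtain ⟨a, b, hab, hσab⟩ : ∃ a b, a < b ∧ σ b < σ a := by
    by_contra! hmono
    exact hσ (eq_one_of_forall_lt_le hmono)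
  have hlt (i : Fin k) : (σ i).castAdd (m + 1) < Fin.natAdd k 0 := castAdd_lt_natAdd _ _
  refine permContains_directSum
    (f := ![a.castAdd (m + 1), b.castAdd (m + 1), Fin.natAdd k 0]) (g := fun j => j.succ.natAdd k)
    ?_ strictMono_natAdd_succ ?_ (fun i j => ?_) fun i j => ?_
  · simpa [Fin.strictMono_iff_lt_succ, Fin.forall_fin_succ] using ⟨hab, castAdd_lt_natAdd _ _⟩
  · have hinv : (σ b).castAdd (m + 1) < (σ a).castAdd (m + 1) := Fin.strictMono_castAdd _ hσab
    have hfix : swap (0 : Fin 3) 1 2 = 2 := rfl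
    simp [Fin.forall_fin_succ, directSum_castAdd, directSum_natAdd, hfix, hinv, hinv.le, hlt,
      (hlt _).le, (hlt _).not_gt]
  · simp only [directSum_natAdd, Perm.one_apply, strictMono_natAdd_succ.lt_iff_lt]
  · revert i
    simp [Fin.forall_fin_succ, directSum_castAdd, directSum_natAdd, castAdd_lt_natAdd]

end DirectSum

/-- The reverse-complement `i ↦ (π i.rev).rev`, the symmetry of pattern containment that rotates
the graph of `π` by a half-turn. -/
def reverseComplement {n : ℕ} : Perm (Fin n) ≃* Perm (Fin n) :=
  MulAut.conj Fin.revPerm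

section ReverseComplement

variable {k n : ℕ}

theorem reverseComplement_apply (π : Perm (Fin n)) (i : Fin n) :
    reverseComplement π i = (π i.rev).rev :=
  rfl

theorem reverseComplement_reverseComplement (π : Perm (Fin n)) :
    reverseComplement (reverseComplement π) = π := by
  ext i
  simp only [reverseComplement_apply, Fin.rev_rev]

theorem PermContains.reverseComplement {τ : Perm (Fin k)} {π : Perm (Fin n)}
    (h : PermContains τ π) :
    PermContains (_root_.reverseComplement τ) (_root_.reverseComplement π) := by
  obtain ⟨f, hf, h⟩ := h
  refine ⟨fun i => (f i.rev).rev, fun i j hij => Fin.rev_lt_rev.2 (hf (Fin.rev_lt_rev.2 hij)),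
    fun i j => ?_⟩
  simp only [reverseComplement_apply, Fin.rev_rev, Fin.rev_lt_rev, h]

theorem reverseComplement_finRotate :
    reverseComplement (finRotate (n + 1)) = (finRotate (n + 1))⁻¹ := by
  refine eq_inv_of_mul_eq_one_left (Equiv.ext fun i => ?_)
  rw [Perm.mul_apply, reverseComplement_apply, Perm.one_apply, Fin.rev_eq_iff]
  induction i using Fin.lastCases with
  | last => simp
  | cast i => simp [Fin.rev_castSucc, Fin.rev_succ]

theorem strictMonoOn_reverseComplement {π : Perm (Fin n)} {S : Finset (Fin n)}
    (hS : StrictMonoOn π S) :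
    StrictMonoOn (reverseComplement π) (S.map Fin.revPerm.toEmbedding) := by
  intro i hi j hj hij
  simp only [Finset.coe_map, coe_toEmbedding, Set.mem_image, Finset.mem_coe,
    Fin.revPerm_apply] at hi hj
  obtain ⟨s, hs, rfl⟩ := hi
  obtain ⟨t, ht, rfl⟩ := hj
  simpa only [reverseComplement_apply, Fin.rev_rev, Fin.rev_lt_rev]
    using hS ht hs (Fin.rev_lt_rev.1 hij)

end ReverseComplement

/-- A pattern class, i.e. a set of permutations closed under passing to patterns, given by its sets
`C n` of members of length `n`. -/
structure IsPatternClass (C : ∀ n, Set (Perm (Fin n))) : Prop where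
  mem_of_permContains : ∀ {k n} {τ : Perm (Fin k)} {π : Perm (Fin n)},
    PermContains τ π → π ∈ C n → τ ∈ C k

/-- A pattern class any two of whose members of the same length `n ≥ N` commute. -/
structure IsAbelianClass (C : ∀ n, Set (Perm (Fin n))) (N : ℕ) : Prop extends IsPatternClass C where
  commute : ∀ {n}, N ≤ n → ∀ π ∈ C n, ∀ ρ ∈ C n, Commute π ρ

namespace IsPatternClass

variable {C : ∀ n, Set (Perm (Fin n))} {n r : ℕ} {π : Perm (Fin n)} {S : Finset (Fin n)}
  {p : Fin n}

theorem reverseComplement (hC : IsPatternClass C) :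
    IsPatternClass fun n => {π | _root_.reverseComplement π ∈ C n} where
  mem_of_permContains h := hC.mem_of_permContains h.reverseComplement

theorem card_le_of_finRotate_notMem (hC : IsPatternClass C)
    (hr : finRotate (r + 1) ∉ C (r + 1)) (hπ : π ∈ C n) (hS : StrictMonoOn π S)
    (hp : ∀ s ∈ S, s ≤ p ∧ π p ≤ π s) : S.card ≤ r := by
  by_contra! hlt
  have hcard : r ≤ (S.erase p).card := by
    have := Finset.pred_card_le_card_erase (s := S) (a := p)
    omega
  refine hr (hC.mem_of_permContains (permContains_finRotate (p := p)
    (hS.mono (Finset.coe_subset.2 (S.erase_subset p))) hcard fun s hs => ?_) hπ)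
  obtain ⟨hsp, hs⟩ := Finset.mem_erase.1 hs
  exact ⟨(hp s hs).1.lt_of_ne hsp, (hp s hs).2.lt_of_ne (π.injective.ne hsp.symm)⟩

theorem card_le_of_finRotate_inv_notMem (hC : IsPatternClass C)
    (hr : (finRotate (r + 1))⁻¹ ∉ C (r + 1)) (hπ : π ∈ C n) (hS : StrictMonoOn π S)
    (hp : ∀ s ∈ S, p ≤ s ∧ π s ≤ π p) : S.card ≤ r := by
  rw [← S.card_map Fin.revPerm.toEmbedding]
  refine hC.reverseComplement.card_le_of_finRotate_notMem (p := p.rev)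
    (π := _root_.reverseComplement π) ?_ ?_ (strictMonoOn_reverseComplement hS) ?_
  · rwa [Set.mem_ofPred_eq, reverseComplement_finRotate]
  · rwa [Set.mem_ofPred_eq, reverseComplement_reverseComplement]
  · simpa [reverseComplement_apply, Fin.le_rev_iff] using fun s => hp (Fin.rev s)

end IsPatternClass

namespace IsAbelianClass

variable {C : ∀ n, Set (Perm (Fin n))} {N n r r' : ℕ} {π : Perm (Fin n)}

theorem reverseComplement (hC : IsAbelianClass C N) :
    IsAbelianClass (fun n => {π | _root_.reverseComplement π ∈ C n}) N where
  toIsPatternClass := hC.toIsPatternClass.reverseComplement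
  commute hn _ hπ _ hρ :=
    (commute_map_iff _root_.reverseComplement.injective).1 (hC.commute hn _ hπ _ hρ)

theorem eq_one_or_eq_swap_of_directSum_mem {m : ℕ} (hC : IsAbelianClass C N) (hN : N ≤ 3 + m)
    {α : Perm (Fin 3)} (hα : directSum α (1 : Perm (Fin (m + 1))) ∈ C (3 + (m + 1))) :
    α = 1 ∨ α = swap 0 1 := by
  by_contra! ⟨hne, hswap⟩
  have hα_mem := hC.mem_of_permContains (permContains_directSum_one_succ α) hα
  have hswap_mem := hC.mem_of_permContains (permContains_directSum_swap_one hne) hα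
  have hcomm : Commute α (swap 0 1) := directSum_left_injective (τ := (1 : Perm (Fin m)) * 1) <| by
    simpa only [directSum_mul_directSum] using (hC.commute hN _ hα_mem _ hswap_mem).eq
  have hcentralizer : ∀ β : Perm (Fin 3), β * swap 0 1 = swap 0 1 * β → β = 1 ∨ β = swap 0 1 := by
    decide
  exact (hcentralizer α hcomm.eq).elim hne hswap

theorem lt_and_lt_of_forall_lt (hC : IsAbelianClass C N) (hπ : π ∈ C n) {a b c : Fin n}
    (hab : a < b) (hbc : b < c) {S : Finset (Fin n)} (hS : StrictMonoOn π S) (hcard : N < S.card)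
    (hlt : ∀ s ∈ S, c < s ∧ π a < π s ∧ π b < π s ∧ π c < π s) : π a < π c ∧ π b < π c := by
  have habc : StrictMono ![a, b, c] := by
    simpa [Fin.strictMono_iff_lt_succ, Fin.forall_fin_succ] using ⟨hab, hbc⟩
  obtain ⟨α, hα⟩ := exists_perm_lt_iff (π.injective.comp habc.injective)
  have hmem : directSum α (1 : Perm (Fin (N + 1))) ∈ C (3 + (N + 1)) := by
    have hg := S.orderEmbOfCardLe_mem (k := N + 1) hcard
    refine hC.mem_of_permContains (permContains_directSum habc
      (S.orderEmbOfCardLe hcard).strictMono hα (fun i j => ?_) fun i j => ?_) hπ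
    · rw [hS.lt_iff_lt (hg i) (hg j), OrderEmbedding.lt_iff_lt, Perm.one_apply, Perm.one_apply]
    · obtain ⟨hc, hπa, hπb, hπc⟩ := hlt _ (hg j)
      fin_cases i
      exacts [⟨(hab.trans hbc).trans hc, hπa⟩, ⟨hbc.trans hc, hπb⟩, ⟨hc, hπc⟩]
  have hlast : α 0 < α 2 ∧ α 1 < α 2 := by
    rcases hC.eq_one_or_eq_swap_of_directSum_mem (Nat.le_add_left N 3) hmem with rfl | rfl <;>
      decide
  exact ⟨(hα 0 2).1 hlast.1, (hα 1 2).1 hlast.2⟩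

theorem lt_of_inversion_below (hC : IsAbelianClass C N)
    (hr : (finRotate (r + 1))⁻¹ ∉ C (r + 1)) (hπ : π ∈ C n) {x y z : Fin n} (hxy : x < y)
    (hinv : π y < π x) {S : Finset (Fin n)} (hS : StrictMonoOn π S) (hcard : N + r < S.card)
    (hlt : ∀ s ∈ S, y < s ∧ π x < π s) (hzx : z ≠ x) (hzy : z ≠ y) : y < z := by
  by_contra! hle
  have hzy : z < y := hle.lt_of_ne hzy
  have hmono (P : Fin n → Prop) [DecidablePred P] : StrictMonoOn π (S.filter P) :=
    hS.mono (Finset.coe_subset.2 (S.filter_subset P))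
  have hlow : (S.filter fun s => π s ≤ π z).card ≤ r := by
    refine hC.card_le_of_finRotate_inv_notMem (p := z) hr hπ (hmono _) fun s hs => ?_
    obtain ⟨hs, hsz⟩ := Finset.mem_filter.1 hs
    exact ⟨(hzy.trans (hlt s hs).1).le, hsz⟩
  have hhigh : N < (S.filter fun s => ¬π s ≤ π z).card := by
    have := S.card_filter_add_card_filter_not fun s => π s ≤ π z
    omega
  have habove : ∀ s ∈ S.filter fun s => ¬π s ≤ π z,
      y < s ∧ π z < π s ∧ π x < π s ∧ π y < π s := by
    intro s hs
    obtain ⟨hs, hzs⟩ := Finset.mem_filter.1 hs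
    exact ⟨(hlt s hs).1, not_le.1 hzs, (hlt s hs).2, hinv.trans (hlt s hs).2⟩
  rcases hzx.lt_or_gt with hzx | hxz
  · exact hinv.not_gt (hC.lt_and_lt_of_forall_lt hπ hzx hxy (hmono _) hhigh habove).2
  · exact hinv.not_gt (hC.lt_and_lt_of_forall_lt hπ hxz hzy (hmono _) hhigh fun s hs =>
      have ⟨hys, hzs, hxs, hys'⟩ := habove s hs
      ⟨hys, hxs, hzs, hys'⟩).1

theorem val_eq_of_inversion_below (hC : IsAbelianClass C N)
    (hr : (finRotate (r + 1))⁻¹ ∉ C (r + 1)) (hπ : π ∈ C n) {x y : Fin n} (hxy : x < y)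
    (hinv : π y < π x) {S : Finset (Fin n)} (hS : StrictMonoOn π S) (hcard : N + r < S.card)
    (hlt : ∀ s ∈ S, y < s ∧ π x < π s) : x.val = 0 ∧ y.val = 1 := by
  have hafter (z : Fin n) (hzx : z.val ≠ x.val) (hzy : z.val ≠ y.val) : y.val < z.val :=
    hC.lt_of_inversion_below hr hπ hxy hinv hS hcard hlt (Fin.val_ne_iff.1 hzx)
      (Fin.val_ne_iff.1 hzy)
  have hzero := hafter ⟨0, by omega⟩
  have hsucc := hafter ⟨x + 1, by omega⟩
  dsimp only at hzero hsucc
  omega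

theorem val_eq_of_inversion (hC : IsAbelianClass C N) (hr : finRotate (r + 1) ∉ C (r + 1))
    (hr' : (finRotate (r' + 1))⁻¹ ∉ C (r' + 1)) (hπ : π ∈ C n) {S : Finset (Fin n)}
    (hS : StrictMonoOn π S) (hcard : 2 * (N + r + r') < S.card) {x y : Fin n} (hxy : x < y)
    (hinv : π y < π x) :
    x.val = 0 ∧ y.val = 1 ∨ y.rev.val = 0 ∧ x.rev.val = 1 := by
  let A := S.filter fun s => y < s ∧ π x < π s
  let B := S.filter fun s => s < x ∧ π s < π y
  let I := S.filter fun s => x ≤ s ∧ π s ≤ π x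
  let J := S.filter fun s => s ≤ y ∧ π y ≤ π s
  have hmono (P : Fin n → Prop) [DecidablePred P] : StrictMonoOn π (S.filter P) :=
    hS.mono (Finset.coe_subset.2 (S.filter_subset P))
  have hI : I.card ≤ r' := hC.card_le_of_finRotate_inv_notMem (p := x) hr' hπ (hmono _) fun s hs =>
    (Finset.mem_filter.1 hs).2
  have hJ : J.card ≤ r := hC.card_le_of_finRotate_notMem (p := y) hr hπ (hmono _) fun s hs =>
    (Finset.mem_filter.1 hs).2
  have hcover : S.card ≤ A.card + B.card + I.card + J.card := by
    have hsub : S ⊆ A ∪ B ∪ I ∪ J := by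
      intro s hs
      simp only [A, B, I, J, Finset.mem_union, Finset.mem_filter, hs, true_and]
      rw [Fin.lt_def] at hxy hinv
      simp only [Fin.lt_def, Fin.le_def]
      omega
    refine (Finset.card_le_card hsub).trans ?_
    have := Finset.card_union_le (A ∪ B ∪ I) J
    have := Finset.card_union_le (A ∪ B) I
    have := Finset.card_union_le A B
    omega
  rcases (by omega : N + r' < A.card ∨ N + r < B.card) with hA | hB
  · exact .inl <| hC.val_eq_of_inversion_below hr' hπ hxy hinv (hmono _) hA fun s hs =>
      (Finset.mem_filter.1 hs).2
  · refine .inr <| hC.reverseComplement.val_eq_of_inversion_below (r := r)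
      (π := _root_.reverseComplement π) (S := B.map Fin.revPerm.toEmbedding) ?_ ?_
      (Fin.rev_lt_rev.2 hxy) ?_ (strictMonoOn_reverseComplement (hmono _)) (by simpa using hB) ?_
    · rwa [Set.mem_ofPred_eq, map_inv, reverseComplement_finRotate, inv_inv]
    · rwa [Set.mem_ofPred_eq, reverseComplement_reverseComplement]
    · simpa [reverseComplement_apply] using hinv
    · simp +contextual [reverseComplement_apply, Fin.rev_lt_iff, B]

end IsAbelianClass

theorem exists_mul_swap_of_inversion {n : ℕ} {π : Perm (Fin n)} {x y : Fin n}
    (hxy : y.val = x.val + 1) {R : Fin n → Fin n → Prop}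
    (hR : ∀ a b, R a b → (a ≠ x ∧ a ≠ y) ∧ b ≠ x ∧ b ≠ y)
    (hπ : ∀ a b, a < b → π b < π a → a = x ∧ b = y ∨ R a b) :
    ∃ σ ∈ ({1, swap x y} : Set (Perm (Fin n))),
      ∀ a b, a < b → (π * σ) b < (π * σ) a → R a b := by
  rcases lt_or_ge (π x) (π y) with hlt | hge
  · refine ⟨1, by simp, fun a b hab hinv => (hπ a b hab hinv).resolve_left ?_⟩
    rintro ⟨rfl, rfl⟩
    exact hlt.not_gt hinv
  refine ⟨swap x y, by simp, fun a b hab hinv => ?_⟩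
  have hne : ¬(a = x ∧ b = y) := by
    rintro ⟨rfl, rfl⟩
    simp only [Perm.mul_apply, swap_apply_left, swap_apply_right] at hinv
    exact hge.not_gt hinv
  have hlt : swap x y a < swap x y b := by
    simp only [swap_apply_def]
    split_ifs <;> simp only [Fin.lt_def, Fin.ext_iff] at * <;> omega
  rcases hπ _ _ hlt hinv with ⟨ha, hb⟩ | hab'
  · rw [swap_apply_eq_iff, swap_apply_left] at ha
    rw [swap_apply_eq_iff, swap_apply_right] at hb
    simp only [ha, hb, Fin.lt_def] at hab
    omega
  · obtain ⟨⟨hax, hay⟩, hbx, hby⟩ := hR _ _ hab'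
    rw [Ne, swap_apply_eq_iff] at hax hay hbx hby
    simp only [swap_apply_left, swap_apply_right] at hax hay hbx hby
    rwa [swap_apply_of_ne_of_ne hay hax, swap_apply_of_ne_of_ne hby hbx] at hab'

/-- The permutation `2 1 3 4 ⋯ n` of length `n = k + 4`, long enough for it to be disjoint from
`1 2 ⋯ (n-2) n (n-1)`. -/
def firstSwap (k : ℕ) : Perm (Fin (k + 4)) :=
  swap 0 1

/-- The permutation `1 2 ⋯ (n-2) n (n-1)` of length `n = k + 4`. -/
def lastSwap (k : ℕ) : Perm (Fin (k + 4)) :=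
  reverseComplement (firstSwap k)

section Swaps

variable {k : ℕ}

theorem lastSwap_eq_swap : lastSwap k = swap (Fin.rev 1) (Fin.rev 0) := by
  rw [lastSwap, firstSwap, reverseComplement, MulAut.conj_apply, ← swap_apply_apply,
    swap_comm, Fin.revPerm_apply, Fin.revPerm_apply]

theorem firstSwap_ne_lastSwap : firstSwap k ≠ lastSwap k := by
  intro h
  have h0 := congrArg Fin.val (DFunLike.congr_fun h 0)
  rw [lastSwap_eq_swap, firstSwap, swap_apply_left, swap_apply_of_ne_of_ne] at h0 <;>
    simp [Fin.ext_iff] at h0 ⊢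

theorem firstSwap_mul_self : firstSwap k * firstSwap k = 1 :=
  swap_mul_self 0 1

theorem lastSwap_mul_self : lastSwap k * lastSwap k = 1 := by
  rw [lastSwap, ← map_mul, firstSwap_mul_self, map_one]

theorem commute_firstSwap_lastSwap : Commute (firstSwap k) (lastSwap k) := by
  rw [lastSwap_eq_swap]
  refine Perm.Disjoint.commute (Perm.disjoint_swap_swap ?_)
  simp [Fin.ext_iff]

theorem mem_of_forall_inversion {π : Perm (Fin (k + 4))}
    (hπ : ∀ x y, x < y → π y < π x → x = 0 ∧ y = 1 ∨ x = Fin.rev 1 ∧ y = Fin.rev 0) :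
    π ∈ ({1, firstSwap k, lastSwap k, firstSwap k * lastSwap k} : Set (Perm (Fin (k + 4)))) := by
  obtain ⟨σ, hσ, hπσ⟩ := exists_mul_swap_of_inversion rfl
    (by rintro _ _ ⟨rfl, rfl⟩; simp [Fin.ext_iff]) hπ
  obtain ⟨τ, hτ, hπστ⟩ := exists_mul_swap_of_inversion (R := fun _ _ => False) (by simp)
    (by simp) fun a b hab hinv => .inl (hπσ a b hab hinv)
  have hone : π * σ * τ = 1 := eq_one_of_forall_lt_le fun a b hab => not_lt.1 (hπστ a b hab)
  have hσ : σ = 1 ∨ σ = firstSwap k := hσ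
  have hτ : τ = 1 ∨ τ = lastSwap k := lastSwap_eq_swap ▸ hτ
  have hπ : π = τ⁻¹ * σ⁻¹ := by
    rw [← mul_inv_rev, eq_inv_iff_mul_eq_one, ← mul_assoc, hone]
  have hf : (firstSwap k)⁻¹ = firstSwap k := inv_eq_of_mul_eq_one_left firstSwap_mul_self
  have hl : (lastSwap k)⁻¹ = lastSwap k := inv_eq_of_mul_eq_one_left lastSwap_mul_self
  rcases hσ with rfl | rfl <;> rcases hτ with rfl | rfl <;>
    simp [hπ, hf, hl, commute_firstSwap_lastSwap.eq]

end Swaps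

section Reversal

variable {n : ℕ}

theorem revPerm_mul_revPerm_mul (π : Perm (Fin n)) : Fin.revPerm * (Fin.revPerm * π) = π :=
  Equiv.ext fun _ => Fin.rev_rev _

theorem commute_revPerm_of_commute_revPerm_mul {π : Perm (Fin n)}
    (h : Commute Fin.revPerm (Fin.revPerm * π)) : Commute Fin.revPerm π := by
  simpa only [revPerm_mul_revPerm_mul] using (Commute.refl Fin.revPerm).mul_right h

theorem commute_revPerm_iff {π : Perm (Fin n)} :
    Commute Fin.revPerm π ↔ reverseComplement π = π := by
  rw [reverseComplement, MulAut.conj_apply, mul_inv_eq_iff_eq_mul]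
  rfl

theorem not_commute_revPerm_finRotate : ¬Commute Fin.revPerm (finRotate (n + 3)) := by
  rw [commute_revPerm_iff, reverseComplement_finRotate, inv_eq_iff_mul_eq_one]
  intro h
  have h0 := congrArg Fin.val (DFunLike.congr_fun h 0)
  rw [Perm.mul_apply, finRotate_apply, finRotate_apply, zero_add] at h0
  simp [Fin.val_add, Nat.mod_eq_of_lt] at h0

theorem PermContains.revPerm_mul {k : ℕ} {τ : Perm (Fin k)} {π : Perm (Fin n)}
    (h : PermContains τ π) : PermContains (Fin.revPerm * τ) (Fin.revPerm * π) := by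
  obtain ⟨f, hf, h⟩ := h
  refine ⟨f, hf, fun a b => ?_⟩
  simpa only [Perm.mul_apply, Fin.revPerm_apply, Fin.rev_lt_rev] using h b a

end Reversal

theorem mem_zpowers_of_commute {α : Type*} [Fintype α] [DecidableEq α] {c π : Perm α}
    (hc : c.IsCycle) (hsupport : c.support = Finset.univ) (h : Commute c π) :
    π ∈ Subgroup.zpowers c := by
  obtain ⟨hmem, hπ⟩ := hc.commute_iff.1 h.symm
  rwa [Perm.ofSubtype_subtypePerm _ fun x _ => hsupport ▸ Finset.mem_univ x] at hπ

namespace IsAbelianClass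

variable {C : ∀ n, Set (Perm (Fin n))} {N k r r' : ℕ}

theorem mem_of_strictMonoOn (hC : IsAbelianClass C N) (hr : finRotate (r + 1) ∉ C (r + 1))
    (hr' : (finRotate (r' + 1))⁻¹ ∉ C (r' + 1)) {π : Perm (Fin (k + 4))} (hπ : π ∈ C (k + 4))
    {S : Finset (Fin (k + 4))} (hS : StrictMonoOn π S) (hcard : 2 * (N + r + r') < S.card) :
    π ∈ ({1, firstSwap k, lastSwap k, firstSwap k * lastSwap k} : Set (Perm (Fin (k + 4)))) :=
  mem_of_forall_inversion fun _ _ hxy hinv =>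
    (hC.val_eq_of_inversion hr hr' hπ hS hcard hxy hinv).imp
      (fun ⟨hx, hy⟩ => ⟨Fin.ext hx, Fin.ext hy⟩)
      fun ⟨hy, hx⟩ => ⟨Fin.rev_eq_iff.1 (Fin.ext hx), Fin.rev_eq_iff.1 (Fin.ext hy)⟩

theorem eventually_mem_of_revPerm_notMem (hC : IsAbelianClass C N)
    (hr : finRotate (r + 1) ∉ C (r + 1)) (hr' : (finRotate (r' + 1))⁻¹ ∉ C (r' + 1))
    {m : ℕ} (hm : Fin.revPerm ∉ C m) : ∀ᶠ k in atTop, ∀ π ∈ C (k + 4),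
      π ∈ ({1, firstSwap k, lastSwap k, firstSwap k * lastSwap k} : Set (Perm (Fin (k + 4)))) := by
  filter_upwards [eventually_ge_atTop (2 * (N + r + r') * m)] with k hk π hπ
  obtain ⟨S, hcard, hS⟩ | ⟨S, hcard, hS⟩ := exists_strictMonoOn_or_strictAntiOn π.injective
    (a := 2 * (N + r + r')) (b := m) (by rw [Fintype.card_fin]; omega)
  · exact hC.mem_of_strictMonoOn hr hr' hπ hS hcard
  · exact absurd (hC.mem_of_permContains (permContains_revPerm hS hcard.le) hπ) hm

theorem complement (hC : IsAbelianClass C N)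
    (hrev : ∀ n ≥ N, ∀ π ∈ C n, Commute Fin.revPerm π) :
    IsAbelianClass (fun n => {π | Fin.revPerm * π ∈ C n}) N where
  mem_of_permContains h := hC.mem_of_permContains h.revPerm_mul
  commute {n} hn π hπ ρ hρ := by
    have hρ' := hrev n hn _ hρ
    have hπρ := (hrev n hn _ hπ).symm.mul_right (hC.commute hn _ hπ _ hρ)
    simpa only [revPerm_mul_revPerm_mul] using
      ((Commute.refl Fin.revPerm).mul_right hρ').mul_left hπρ

theorem eq_one_or_eq_of_commute_revPerm (hC : IsAbelianClass C N)
    (hrev : ∀ n ≥ N, ∀ π ∈ C n, Commute Fin.revPerm π) (hk : N ≤ k + 4) {π : Perm (Fin (k + 4))}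
    (hπ : π ∈ C (k + 4)) {S : Finset (Fin (k + 4))} (hS : StrictMonoOn π S)
    (hcard : 6 * N + 8 < S.card) : π = 1 ∨ π = firstSwap k * lastSwap k := by
  have hr : finRotate (N + 3) ∉ C (N + 3) := fun h =>
    not_commute_revPerm_finRotate (hrev _ (Nat.le_add_right N 3) _ h)
  have hr' : (finRotate (N + 3))⁻¹ ∉ C (N + 3) := fun h =>
    not_commute_revPerm_finRotate (Commute.inv_right_iff.1 (hrev _ (Nat.le_add_right N 3) _ h))
  have hcomm := hrev _ hk π hπ
  rcases hC.mem_of_strictMonoOn hr hr' hπ hS (by omega) with rfl | rfl | rfl | rfl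
  · exact .inl rfl
  · exact absurd (commute_revPerm_iff.1 hcomm).symm firstSwap_ne_lastSwap
  · refine absurd ?_ (firstSwap_ne_lastSwap (k := k))
    rw [← commute_revPerm_iff.1 hcomm, lastSwap, reverseComplement_reverseComplement]
  · exact .inr rfl

theorem eventually_mem_of_commute_revPerm (hC : IsAbelianClass C N)
    (hrev : ∀ n ≥ N, ∀ π ∈ C n, Commute Fin.revPerm π) : ∀ᶠ k in atTop, ∀ π ∈ C (k + 4),
      π ∈ ({1, Fin.revPerm, firstSwap k * lastSwap k,
        Fin.revPerm * (firstSwap k * lastSwap k)} : Set (Perm (Fin (k + 4)))) := by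
  filter_upwards [eventually_ge_atTop N, eventually_ge_atTop ((6 * N + 8) * (6 * N + 8))]
    with k hN hk π hπ
  obtain ⟨S, hcard, hS⟩ | ⟨S, hcard, hS⟩ := exists_strictMonoOn_or_strictAntiOn π.injective
    (a := 6 * N + 8) (b := 6 * N + 8) (by rw [Fintype.card_fin]; omega)
  · rcases hC.eq_one_or_eq_of_commute_revPerm hrev (by omega) hπ hS hcard with rfl | rfl <;> simp
  · have hS' : StrictMonoOn ⇑((Fin.revPerm : Perm (Fin (k + 4))) * π) S :=
      fun i hi j hj hij => Fin.rev_lt_rev.2 (hS hi hj hij)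
    have hcompl := (hC.complement hrev).eq_one_or_eq_of_commute_revPerm
      (fun n hn ρ hρ => commute_revPerm_of_commute_revPerm_mul (hrev n hn _ hρ)) (by omega)
      (π := Fin.revPerm * π) (by rwa [Set.mem_ofPred_eq, revPerm_mul_revPerm_mul]) hS' hcard
    rw [← revPerm_mul_revPerm_mul π]
    rcases hcompl with h | h <;> simp [h]

theorem eventually_subset_of_finRotate_notMem (hC : IsAbelianClass C N)
    (hr : finRotate (r + 1) ∉ C (r + 1)) (hr' : (finRotate (r' + 1))⁻¹ ∉ C (r' + 1)) :
    ∀ᶠ n in atTop, ∃ a b : Perm (Fin n), a * a = 1 ∧ b * b = 1 ∧ Commute a b ∧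
      C n ⊆ {1, a, b, a * b} := by
  rw [← map_add_atTop_eq_nat 4, eventually_map]
  by_cases hrev : ∀ n, Fin.revPerm ∈ C n
  · filter_upwards [hC.eventually_mem_of_commute_revPerm fun n hn => hC.commute hn _ (hrev n)]
      with k hk
    refine ⟨Fin.revPerm, firstSwap k * lastSwap k, ?_, ?_, ?_, hk⟩
    · simpa only [mul_one] using revPerm_mul_revPerm_mul 1
    · rw [commute_firstSwap_lastSwap.symm.mul_mul_mul_comm, firstSwap_mul_self, lastSwap_mul_self,
        one_mul]
    · rw [commute_revPerm_iff, map_mul, commute_firstSwap_lastSwap.eq, lastSwap,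
        reverseComplement_reverseComplement]
  · obtain ⟨m, hm⟩ := not_forall.1 hrev
    filter_upwards [hC.eventually_mem_of_revPerm_notMem hr hr' hm] with k hk
    exact ⟨_, _, firstSwap_mul_self, lastSwap_mul_self, commute_firstSwap_lastSwap, hk⟩

theorem closure_eq_zpowers_finRotate (hC : IsAbelianClass C N) {n : ℕ} (hN : N ≤ n) (hn : 2 ≤ n)
    (hrot : finRotate n ∈ C n ∨ (finRotate n)⁻¹ ∈ C n) :
    Subgroup.closure (C n) = Subgroup.zpowers (finRotate n) := by
  refine le_antisymm ((Subgroup.closure_le _).2 fun π hπ => ?_) ?_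
  · refine mem_zpowers_of_commute (isCycle_finRotate_of_le hn) (support_finRotate_of_le hn) ?_
    exact hrot.elim (fun h => hC.commute hN _ h _ hπ) fun h =>
      Commute.inv_left_iff.1 (hC.commute hN _ h _ hπ)
  · rw [Subgroup.zpowers_le]
    exact hrot.elim (fun h => Subgroup.subset_closure h) fun h =>
      inv_mem_iff.1 (Subgroup.subset_closure h)

theorem eventually_closure_eq_zpowers_or_eventually_subset (hC : IsAbelianClass C N) :
    (∀ᶠ n in atTop, Subgroup.closure (C n) = Subgroup.zpowers (finRotate n)) ∨
      ∀ᶠ n in atTop, ∃ a b : Perm (Fin n), a * a = 1 ∧ b * b = 1 ∧ Commute a b ∧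
        C n ⊆ {1, a, b, a * b} := by
  by_cases hrot : (∀ r, finRotate (r + 1) ∈ C (r + 1)) ∨ ∀ r, (finRotate (r + 1))⁻¹ ∈ C (r + 1)
  · refine .inl ?_
    filter_upwards [eventually_ge_atTop N, eventually_ge_atTop 2] with n hN hn
    obtain ⟨r, rfl⟩ : ∃ r, n = r + 1 := ⟨n - 1, by omega⟩
    exact hC.closure_eq_zpowers_finRotate hN hn (hrot.imp (· r) (· r))
  · obtain ⟨⟨r, hr⟩, r', hr'⟩ := (not_or.1 hrot).imp not_forall.1 not_forall.1
    exact .inr (hC.eventually_subset_of_finRotate_notMem hr hr')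

end IsAbelianClass

section Groups

variable {G : Type*} [Group G]

theorem closure_subset_of_subset {A : Set G} {a b : G} (ha : a * a = 1) (hb : b * b = 1)
    (hab : Commute a b) (hA : A ⊆ {1, a, b, a * b}) :
    (Subgroup.closure A : Set G) ⊆ {1, a, b, a * b} := by
  have ha' (x : G) : a * (a * x) = x := by rw [← mul_assoc, ha, one_mul]
  have hba := hab.symm.eq
  have hba' (x : G) : b * (a * x) = a * (b * x) := hab.symm.left_comm x
  intro x hx
  induction hx using Subgroup.closure_induction with
  | mem x hx => exact hA hx
  | one => simp
  | mul x y _ _ hx hy =>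
    rcases hx with rfl | rfl | rfl | rfl <;> rcases hy with rfl | rfl | rfl | rfl <;>
      simp [mul_assoc, ha, hb, hba, ha', hba']
  | inv x _ hx =>
    rcases hx with rfl | rfl | rfl | rfl <;>
      simp [inv_eq_of_mul_eq_one_left ha, inv_eq_of_mul_eq_one_left hb, hba]

theorem mul_self_eq_one_of_mem {a b x : G} (ha : a * a = 1) (hb : b * b = 1)
    (hab : Commute a b) (hx : x ∈ ({1, a, b, a * b} : Set G)) : x * x = 1 := by
  rcases hx with rfl | rfl | rfl | rfl
  exacts [one_mul 1, ha, hb, by rw [hab.symm.mul_mul_mul_comm, ha, hb, one_mul]]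

theorem subsingleton_or_nonempty_mulEquiv_of_card_le_four [Finite G]
    (hsq : ∀ x : G, x * x = 1) (hcard : Nat.card G ≤ 4) :
    Subsingleton G ∨ Nonempty (G ≃* Multiplicative (ZMod 2)) ∨
      Nonempty (G ≃* Multiplicative (ZMod 2) × Multiplicative (ZMod 2)) := by
  have : Fact (Nat.Prime 2) := ⟨Nat.prime_two⟩
  obtain ⟨r, hr⟩ := IsPGroup.iff_card.1 (show IsPGroup 2 G from fun x => ⟨1, by
    rw [pow_one, sq, hsq]⟩)
  have hr2 : r < 3 := (Nat.pow_lt_pow_iff_right one_lt_two).1 (by omega)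
  interval_cases r
  · exact .inl (Finite.card_le_one_iff_subsingleton.1 hr.le)
  · exact .inr (.inl ⟨mulEquivOfPrimeCardEq (p := 2) hr (by simp)⟩)
  · have : Nontrivial G := Finite.one_lt_card_iff_nontrivial.1 (by omega)
    have hexp : Monoid.exponent G = 2 := (Monoid.exponent_eq_prime_iff Nat.prime_two).2
      fun x hx => orderOf_eq_prime (by rw [sq, hsq]) hx
    have : IsKleinFour G := ⟨hr, hexp⟩
    obtain ⟨e⟩ := IsKleinFour.nonempty_mulEquiv (G₁ := G) (G₂ := Multiplicative (ZMod 2 × ZMod 2))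
    exact .inr (.inr ⟨e.trans (MulEquiv.prodMultiplicative _ _)⟩)

theorem subsingleton_or_nonempty_closure_mulEquiv {A : Set G} {a b : G} (ha : a * a = 1)
    (hb : b * b = 1) (hab : Commute a b) (hA : A ⊆ {1, a, b, a * b}) :
    Subsingleton (Subgroup.closure A) ∨
      Nonempty (Subgroup.closure A ≃* Multiplicative (ZMod 2)) ∨
      Nonempty (Subgroup.closure A ≃* Multiplicative (ZMod 2) × Multiplicative (ZMod 2)) := by
  classical
  have hclosure : (Subgroup.closure A : Set G) ⊆ ({1, a, b, a * b} : Finset G) := by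
    simpa using closure_subset_of_subset ha hb hab hA
  have : Finite (Subgroup.closure A) := (Finset.finite_toSet _).subset hclosure
  have hcard : Nat.card (Subgroup.closure A) ≤ 4 :=
    calc Nat.card (Subgroup.closure A)
      _ ≤ ({1, a, b, a * b} : Finset G).card :=
        (Set.ncard_le_ncard hclosure).trans_eq (Set.ncard_coe_finset _)
      _ ≤ 4 := Finset.card_le_four
  exact subsingleton_or_nonempty_mulEquiv_of_card_le_four (fun x => Subtype.ext <|
    mul_self_eq_one_of_mem ha hb hab (closure_subset_of_subset ha hb hab hA x.2)) hcard

theorem not_eventually_nonempty_mulEquiv_zmod :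
    ¬∀ᶠ n in atTop, Nonempty (G ≃* Multiplicative (ZMod n)) := by
  intro h
  obtain ⟨m, hm⟩ := eventually_atTop.1 h
  have hcard (n : ℕ) (hn : m ≤ n) : Nat.card G = n := by
    obtain ⟨e⟩ := hm n hn
    rw [Nat.card_congr (e.toEquiv.trans Multiplicative.toAdd), Nat.card_zmod]
  have := hcard m le_rfl
  have := hcard (m + 1) m.le_succ
  omega

end Groups

theorem nonempty_zpowers_finRotate_mulEquiv {n : ℕ} (hn : 2 ≤ n) :
    Nonempty (Subgroup.zpowers (finRotate n) ≃* Multiplicative (ZMod n)) := by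
  refine ⟨mulEquivOfCyclicCardEq ?_⟩
  rw [Nat.card_zpowers, (isCycle_finRotate_of_le hn).orderOf, support_finRotate_of_le hn,
    Finset.card_fin, Nat.card_congr Multiplicative.toAdd, Nat.card_zmod]

theorem isAbelianClass_avoidSet {T : Set (Σ k : ℕ, Perm (Fin k))} {G : ℕ → Type*}
    [∀ n, CommGroup (G n)] {N : ℕ}
    (h : ∀ n ≥ N, Nonempty (Subgroup.closure (avoidSet n T) ≃* G n)) :
    IsAbelianClass (fun n => avoidSet n T) N where
  mem_of_permContains hτ hπ := fun ρ hρ hρτ => hπ ρ hρ (hρτ.trans hτ)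
  commute hn π hπ ρ hρ := by
    obtain ⟨e⟩ := h _ hn
    have hcomm := (commute_map_iff e.injective).1 <| Commute.all
      (e ⟨π, Subgroup.subset_closure hπ⟩) (e ⟨ρ, Subgroup.subset_closure hρ⟩)
    exact congrArg Subtype.val hcomm.eq

theorem abelian_eventually_constant_group_general (T : Set (Σ k : ℕ, Perm (Fin k)))
    (G : ℕ → Type*) [∀ n, CommGroup (G n)]
    (h : ∃ n₀ : ℕ, ∀ n : ℕ, n₀ ≤ n → Nonempty (Subgroup.closure (avoidSet n T) ≃* G n)) :
    (∀ᶠ n in atTop, Nonempty (G n ≃* Multiplicative (ZMod n))) ∨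
      ∀ᶠ n in atTop, Subsingleton (G n) ∨ Nonempty (G n ≃* Multiplicative (ZMod 2)) ∨
        Nonempty (G n ≃* Multiplicative (ZMod 2) × Multiplicative (ZMod 2)) := by
  obtain ⟨N, h⟩ := h
  refine (isAbelianClass_avoidSet h).eventually_closure_eq_zpowers_or_eventually_subset.imp
    (fun hcyclic => ?_) fun hsmall => ?_
  · filter_upwards [hcyclic, eventually_ge_atTop N, eventually_ge_atTop 2] with n hn hN hn2
    obtain ⟨e⟩ := h n hN
    obtain ⟨f⟩ := nonempty_zpowers_finRotate_mulEquiv hn2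
    exact ⟨e.symm.trans ((MulEquiv.subgroupCongr hn).trans f)⟩
  · filter_upwards [hsmall, eventually_ge_atTop N] with n ⟨a, b, ha, hb, hab, hsub⟩ hN
    obtain ⟨e⟩ := h n hN
    exact (subsingleton_or_nonempty_closure_mulEquiv ha hb hab hsub).imp
      (fun (_ : Subsingleton _) => e.symm.toEquiv.subsingleton) <|
      Or.imp (fun ⟨f⟩ => ⟨e.symm.trans f⟩) fun ⟨f⟩ => ⟨e.symm.trans f⟩

theorem abelian_eventually_constant_group (T : Set (Σ k : ℕ, Equiv.Perm (Fin k)))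
    (G : Type) [CommGroup G] [Finite G] [Nontrivial G]
    (h : ∃ n₀ : ℕ, ∀ n : ℕ, n₀ ≤ n →
      Nonempty (Subgroup.closure (avoidSet n T) ≃* G)) :
    Nonempty (G ≃* Multiplicative (ZMod 2)) ∨
      Nonempty (G ≃* Multiplicative (ZMod 2) × Multiplicative (ZMod 2)) := by
  have hsmall := (abelian_eventually_constant_group_general T (fun _ => G) h).resolve_left
    not_eventually_nonempty_mulEquiv_zmod
  exact hsmall.exists.elim fun _ hn => hn.resolve_left (not_subsingleton G)
end

section
/- For every n ≥ 4, the subgroup ⟨S_n({123, 132, 213, 231})⟩ of S_n is isomorphic to the dihedral group D_4 of order 8; indeed, S_n({123, 132, 213, 231}) = {ψ_n, (1,2)∘ψ_n}, where (1,2)∘ψ_n is an element of order 4. -/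
def p123 : Equiv.Perm (Fin 3) := 1
def p132 : Equiv.Perm (Fin 3) := Equiv.swap 1 2
def p213 : Equiv.Perm (Fin 3) := Equiv.swap 0 1
def p231 : Equiv.Perm (Fin 3) := finRotate 3

/-!
Avoiding `123`, `132`, `213` and `231` leaves only `312` and `321`: the first entry of any three is
the largest. Equivalently, every entry except the penultimate one exceeds all later entries, so
`π` is decreasing up to a swap of its last two entries, that is, `π = ψ` or `π = (1,2) ∘ ψ`.

With `s = (1,2)`, both `s` and `ψ` are involutions, and for `n ≥ 4` the conjugate `ψ s ψ⁻¹`, which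
swaps the last two points, commutes with `s` and differs from it. Hence `(s ψ)² = s · ψ s ψ⁻¹` is an
involution and `s ψ` has order `4`, and two involutions generate a dihedral group.
-/

section Dihedral

variable {G : Type*} [Group G] {n : ℕ} {a g s : G}

/-- The homomorphism `i ↦ g ^ i` from `ℤ/n`, written multiplicatively, where `g ^ n = 1`; it is the
rotation part of `dihedralLift`. -/
def zmodPowersHom (hg : g ^ n = 1) : Multiplicative (ZMod n) →* G :=
  AddMonoidHom.toMultiplicativeLeft
    (ZMod.lift n ⟨zmultiplesHom (Additive G) (.ofMul g), by simp [← ofMul_pow, hg]⟩)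

lemma zmodPowersHom_intCast (hg : g ^ n = 1) (k : ℤ) :
    zmodPowersHom hg (.ofAdd (k : ZMod n)) = g ^ k := by
  simp [zmodPowersHom]

lemma zmodPowersHom_mem_zpowers (hg : g ^ n = 1) (x : Multiplicative (ZMod n)) :
    zmodPowersHom hg x ∈ Subgroup.zpowers g := by
  obtain ⟨k, hk⟩ := ZMod.intCast_surjective x.toAdd
  rw [← ofAdd_toAdd x, ← hk, zmodPowersHom_intCast]
  exact zpow_mem (Subgroup.mem_zpowers g) k

lemma zmodPowersHom_injective (hg : orderOf g = n) :
    Function.Injective (zmodPowersHom (hg ▸ pow_orderOf_eq_one g)) := by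
  rw [injective_iff_map_eq_one]
  intro x hx
  obtain ⟨k, hk⟩ := ZMod.intCast_surjective x.toAdd
  rw [← ofAdd_toAdd x, ← hk] at hx ⊢
  rwa [zmodPowersHom_intCast, ← orderOf_dvd_iff_zpow_eq_one, hg,
    ← ZMod.intCast_zmod_eq_zero_iff_dvd, ← ofAdd_eq_one] at hx

lemma zmodPowersHom_mul_of_semiconjBy (hg : g ^ n = 1) (hag : SemiconjBy a g g⁻¹)
    (x : Multiplicative (ZMod n)) :
    zmodPowersHom hg x * a = a * (zmodPowersHom hg x)⁻¹ := by
  obtain ⟨k, hk⟩ := ZMod.intCast_surjective x.toAdd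
  rw [← ofAdd_toAdd x, ← hk, zmodPowersHom_intCast]
  simpa only [inv_zpow, inv_inv] using (hag.zpow_right k).inv_right.eq.symm

/-- The homomorphism from the dihedral group sending the generating rotation `r 1` to `g` and the
reflection `sr 0` to `a`, where `a` and `g` satisfy the dihedral relations. -/
def dihedralLift (hg : g ^ n = 1) (ha : a ^ 2 = 1) (hag : SemiconjBy a g g⁻¹) :
    DihedralGroup n →* G where
  toFun
    | .r i => zmodPowersHom hg (.ofAdd i)
    | .sr i => a * zmodPowersHom hg (.ofAdd i)
  map_one' := map_one (zmodPowersHom hg)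
  map_mul' := by
    have hcomm (i j : ZMod n) : zmodPowersHom hg (.ofAdd i) * (a * zmodPowersHom hg (.ofAdd j)) =
        a * zmodPowersHom hg (.ofAdd (j - i)) := by
      rw [← mul_assoc, zmodPowersHom_mul_of_semiconjBy hg hag, mul_assoc, ← map_inv, ← map_mul,
        ← ofAdd_neg, ← ofAdd_add, neg_add_eq_sub]
    rintro (i | i) (j | j)
    · exact map_mul (zmodPowersHom hg) (.ofAdd i) (.ofAdd j)
    · exact (hcomm i j).symm
    · simp only [DihedralGroup.sr_mul_r, ofAdd_add, map_mul, mul_assoc]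
    · simp only [DihedralGroup.sr_mul_sr, mul_assoc, hcomm]
      rw [← mul_assoc, ← pow_two, ha, one_mul]

lemma dihedralLift_injective (hg : orderOf g = n) (ha : a ^ 2 = 1) (hag : SemiconjBy a g g⁻¹)
    (hmem : a ∉ Subgroup.zpowers g) :
    Function.Injective (dihedralLift (hg ▸ pow_orderOf_eq_one g) ha hag) := by
  rw [injective_iff_map_eq_one]
  rintro (i | i) h
  · rw [DihedralGroup.one_def]
    exact congrArg DihedralGroup.r ((map_eq_one_iff _ (zmodPowersHom_injective hg)).1 h)
  · refine absurd ?_ hmem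
    rw [eq_inv_of_mul_eq_one_left h]
    exact inv_mem (zmodPowersHom_mem_zpowers _ _)

lemma range_dihedralLift (hg : g ^ n = 1) (ha : a ^ 2 = 1) (hag : SemiconjBy a g g⁻¹) :
    (dihedralLift hg ha hag).range = Subgroup.closure {a, g} := by
  have ha_mem : a ∈ Subgroup.closure {a, g} := Subgroup.subset_closure (.inl rfl)
  have hg_mem : g ∈ Subgroup.closure {a, g} := Subgroup.subset_closure (.inr rfl)
  have hpow_mem (x : Multiplicative (ZMod n)) :
      zmodPowersHom hg x ∈ Subgroup.closure {a, g} :=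
    Subgroup.zpowers_le.2 hg_mem (zmodPowersHom_mem_zpowers hg x)
  apply le_antisymm
  · rintro _ ⟨i | i, rfl⟩
    · exact hpow_mem _
    · exact mul_mem ha_mem (hpow_mem _)
  · rw [Subgroup.closure_le, Set.pair_subset_iff]
    constructor
    · exact ⟨.sr 0, mul_eq_left.2 (map_one (zmodPowersHom hg))⟩
    · exact ⟨.r 1, by simpa using! zmodPowersHom_intCast hg 1⟩

lemma nonempty_closure_mulEquiv_dihedralGroup (hg : orderOf g = n) (ha : a ^ 2 = 1)
    (hag : SemiconjBy a g g⁻¹) (hmem : a ∉ Subgroup.zpowers g) :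
    Nonempty (Subgroup.closure {a, g} ≃* DihedralGroup n) :=
  ⟨((MonoidHom.ofInjective (dihedralLift_injective hg ha hag hmem)).trans
    (MulEquiv.subgroupCongr (range_dihedralLift _ ha hag))).symm⟩

lemma notMem_zpowers_of_semiconjBy_inv (hag : SemiconjBy a g g⁻¹) (hg : g ^ 2 ≠ 1) :
    a ∉ Subgroup.zpowers g := by
  rintro ⟨k, rfl⟩
  have hinv : g = g⁻¹ := mul_right_cancel (((Commute.refl g).zpow_left k).eq.symm.trans hag.eq)
  exact hg (by rw [pow_two, mul_eq_one_iff_eq_inv, ← hinv])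

lemma semiconjBy_mul_inv_of_sq_eq_one (hs : s ^ 2 = 1) (ha : a ^ 2 = 1) :
    SemiconjBy a (s * a) (s * a)⁻¹ := by
  rw [pow_two] at hs ha
  rw [SemiconjBy, mul_inv_rev, inv_eq_of_mul_eq_one_left hs, inv_eq_of_mul_eq_one_left ha,
    mul_assoc]

lemma nonempty_closure_mulEquiv_dihedralGroup_of_sq_eq_one (hs : s ^ 2 = 1) (ha : a ^ 2 = 1)
    (hsa : (s * a) ^ 2 ≠ 1) (horder : orderOf (s * a) = n) :
    Nonempty (Subgroup.closure {a, s * a} ≃* DihedralGroup n) :=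
  have hsemi := semiconjBy_mul_inv_of_sq_eq_one hs ha
  nonempty_closure_mulEquiv_dihedralGroup horder ha hsemi
    (notMem_zpowers_of_semiconjBy_inv hsemi hsa)

lemma orderOf_mul_eq_four (hs : s ^ 2 = 1) (ha : a ^ 2 = 1) (hconj : Commute s (a * s * a⁻¹))
    (hne : a * s * a⁻¹ ≠ s) : orderOf (s * a) = 4 := by
  have hs_inv : s⁻¹ = s := inv_eq_of_mul_eq_one_left (by rwa [← pow_two])
  have ha_inv : a⁻¹ = a := inv_eq_of_mul_eq_one_left (by rwa [← pow_two])
  have hsq : (s * a) ^ 2 = s * (a * s * a⁻¹) := by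
    simp only [ha_inv, pow_two, mul_assoc]
  refine orderOf_eq_prime_pow (p := 2) (n := 1) ?_ ?_
  · rwa [pow_one, hsq, mul_eq_one_iff_inv_eq, hs_inv, eq_comm]
  · calc (s * a) ^ 2 ^ (1 + 1) = ((s * a) ^ 2) ^ 2 := pow_mul _ 2 2
      _ = s ^ 2 * (a * s ^ 2 * a⁻¹) := by rw [hsq, hconj.mul_pow, conj_pow]
      _ = 1 := by rw [hs, mul_one, mul_inv_cancel, one_mul]

end Dihedral

section Patterns

variable {n : ℕ}

lemma permContains_iff_forall_lt {k : ℕ} {τ : Equiv.Perm (Fin k)} {π : Equiv.Perm (Fin n)} :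
    PermContains τ π ↔
      ∃ f : Fin k → Fin n, StrictMono f ∧ ∀ a b, a < b → (τ a < τ b ↔ π (f a) < π (f b)) := by
  refine ⟨fun ⟨f, hf, h⟩ => ⟨f, hf, fun a b _ => h a b⟩, fun ⟨f, hf, h⟩ => ⟨f, hf, fun a b => ?_⟩⟩
  rcases lt_trichotomy a b with hab | rfl | hba
  · exact h a b hab
  · simp only [lt_irrefl]
  · have hτ : τ b ≠ τ a := τ.injective.ne hba.ne
    have hπ : π (f b) ≠ π (f a) := π.injective.ne (hf hba).ne
    rw [← not_le, ← not_le, hτ.le_iff_lt, hπ.le_iff_lt, h b a hba]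

lemma permContains_fin_three {τ : Equiv.Perm (Fin 3)} {π : Equiv.Perm (Fin n)} :
    PermContains τ π ↔ ∃ i j k, i < j ∧ j < k ∧ (τ 0 < τ 1 ↔ π i < π j) ∧
      (τ 0 < τ 2 ↔ π i < π k) ∧ (τ 1 < τ 2 ↔ π j < π k) := by
  rw [permContains_iff_forall_lt]
  constructor
  · rintro ⟨f, hf, h⟩
    exact ⟨f 0, f 1, f 2, hf (by decide), hf (by decide), h 0 1 (by decide), h 0 2 (by decide),
      h 1 2 (by decide)⟩
  · rintro ⟨i, j, k, hij, hjk, h01, h02, h12⟩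
    refine ⟨![i, j, k], Fin.strictMono_iff_lt_succ.2 ?_, ?_⟩ <;>
      simp [Fin.forall_fin_succ, *]

lemma mem_avoidSet_123_132_213_231_iff {π : Equiv.Perm (Fin n)} :
    π ∈ avoidSet n {⟨3, p123⟩, ⟨3, p132⟩, ⟨3, p213⟩, ⟨3, p231⟩} ↔
      ∀ i j k, i < j → j < k → π j < π i ∧ π k < π i := by
  have h123 : p123 0 < p123 1 ∧ p123 0 < p123 2 ∧ p123 1 < p123 2 := by decide
  have h132 : p132 0 < p132 1 ∧ p132 0 < p132 2 ∧ ¬ p132 1 < p132 2 := by decide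
  have h213 : ¬ p213 0 < p213 1 ∧ p213 0 < p213 2 ∧ p213 1 < p213 2 := by decide
  have h231 : p231 0 < p231 1 ∧ ¬ p231 0 < p231 2 ∧ ¬ p231 1 < p231 2 := by decide
  simp only [avoidSet, Set.mem_ofPred_eq, Set.forall_mem_insert, Set.mem_singleton_iff, forall_eq,
    permContains_fin_three, h123, h132, h213, h231, true_iff, false_iff, not_exists, not_and]
  simp only [← forall_and]
  refine forall₃_congr fun i j k => ?_
  have hij : i < j → π i ≠ π j := fun h => π.injective.ne h.ne
  have hik : i < k → π i ≠ π k := fun h => π.injective.ne h.ne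
  grind

end Patterns

section Decreasing

variable {n : ℕ}

lemma strictAnti_iff_eq_revPerm {π : Equiv.Perm (Fin n)} : StrictAnti π ↔ π = Fin.revPerm := by
  refine ⟨fun h => ?_, fun h => h ▸ Fin.rev_strictAnti⟩
  have hmono : StrictMono (Fin.rev ∘ π) := Fin.rev_strictAnti.comp h
  have hid : Fin.rev ∘ π = id := (hmono.range_inj strictMono_id).1 <| by
    rw [(Fin.rev_surjective.comp π.surjective).range_eq, Set.range_id]
  ext1 i
  rw [Fin.revPerm_apply, ← Fin.rev_rev (π i)]
  exact congrArg Fin.rev (congrFun hid i)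

lemma val_rev_one : (Fin.rev (1 : Fin (n + 2)) : ℕ) = n := by
  rw [Fin.val_rev, Fin.val_one, Nat.add_sub_cancel]

variable {α : Type*}

/-- The property of a sequence `f 0, …, f (n + 1)` of being strictly decreasing up to the order of
its last two terms; it makes explicit what avoiding the four patterns leaves undetermined. The
penultimate index is written `Fin.rev 1`. -/
def StrictAntiExceptLastTwo [LT α] (f : Fin (n + 2) → α) : Prop :=
  ∀ i j, i < j → i ≠ Fin.rev 1 → f j < f i

lemma forall_lt_first_iff_strictAntiExceptLastTwo [LT α] {f : Fin (n + 2) → α} :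
    (∀ i j k, i < j → j < k → f j < f i ∧ f k < f i) ↔ StrictAntiExceptLastTwo f := by
  constructor
  · intro h i j hij hi
    rcases (Fin.le_last j).lt_or_eq with hj | rfl
    · exact (h i j (Fin.last _) hij hj).1
    · exact (h i (Fin.rev 1) (Fin.last _) (by grind [val_rev_one]) (by grind [val_rev_one])).2
  · intro h i j k hij hjk
    have hi : i ≠ Fin.rev 1 := by grind [val_rev_one]
    exact ⟨h i j hij hi, h i k (hij.trans hjk) hi⟩

lemma StrictAntiExceptLastTwo.comp_swap [LT α] {f : Fin (n + 2) → α}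
    (hf : StrictAntiExceptLastTwo f) :
    StrictAntiExceptLastTwo (f ∘ Equiv.swap (Fin.rev 0) (Fin.rev 1)) := by
  intro i j hij hi
  have hi_fixed : Equiv.swap (Fin.rev 0) (Fin.rev 1) i = i :=
    Equiv.swap_apply_of_ne_of_ne (by grind [val_rev_one]) hi
  have hlt : i < Equiv.swap (Fin.rev 0) (Fin.rev 1) j := by grind [val_rev_one]
  simpa only [Function.comp_apply, hi_fixed] using hf _ _ hlt hi

lemma StrictAntiExceptLastTwo.strictAnti [Preorder α] {f : Fin (n + 2) → α}
    (hf : StrictAntiExceptLastTwo f) (hlast : f (Fin.rev 0) < f (Fin.rev 1)) : StrictAnti f := by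
  intro i j hij
  rcases eq_or_ne i (Fin.rev 1) with rfl | hi
  · have hj : j = Fin.rev 0 := by grind [val_rev_one]
    exact hj ▸ hlast
  · exact hf i j hij hi

lemma strictAntiExceptLastTwo_iff [LinearOrder α] {f : Fin (n + 2) → α}
    (hf : Function.Injective f) :
    StrictAntiExceptLastTwo f ↔
      StrictAnti f ∨ StrictAnti (f ∘ Equiv.swap (Fin.rev 0) (Fin.rev 1)) := by
  constructor
  · intro h
    have hne : (Fin.rev 0 : Fin (n + 2)) ≠ Fin.rev 1 := Fin.rev_injective.ne zero_ne_one
    rcases (hf.ne hne).lt_or_gt with hlt | hgt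
    · exact .inl (h.strictAnti hlt)
    · exact .inr (h.comp_swap.strictAnti (by simpa only [Function.comp_apply,
        Equiv.swap_apply_left, Equiv.swap_apply_right] using hgt))
  · rintro (h | h)
    · exact fun i j hij _ => h hij
    · have hswap : StrictAntiExceptLastTwo (f ∘ Equiv.swap (Fin.rev 0) (Fin.rev 1)) :=
        fun i j hij _ => h hij
      simpa only [Function.comp_assoc, ← Equiv.Perm.coe_mul, Equiv.swap_mul_self,
        Equiv.Perm.coe_one, Function.comp_id] using hswap.comp_swap

end Decreasing

section RevPerm

variable {n : ℕ}

lemma revPerm_sq : (Fin.revPerm : Equiv.Perm (Fin n)) ^ 2 = 1 := by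
  ext; simp [pow_two]

lemma swap_sq {α : Type*} [DecidableEq α] (x y : α) : Equiv.swap x y ^ 2 = 1 := by
  rw [pow_two, Equiv.swap_mul_self]

lemma avoidSet_123_132_213_231_eq :
    avoidSet (n + 2) {⟨3, p123⟩, ⟨3, p132⟩, ⟨3, p213⟩, ⟨3, p231⟩} =
      {Fin.revPerm, Equiv.swap 0 1 * Fin.revPerm} := by
  ext π
  have hswap : Fin.revPerm * Equiv.swap (Fin.rev 0) (Fin.rev 1) =
      Equiv.swap (0 : Fin (n + 2)) 1 * Fin.revPerm := by
    simp only [Equiv.mul_swap_eq_swap_mul, Fin.revPerm_apply, Fin.rev_rev]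
  rw [mem_avoidSet_123_132_213_231_iff, forall_lt_first_iff_strictAntiExceptLastTwo,
    strictAntiExceptLastTwo_iff π.injective, ← Equiv.Perm.coe_mul,
    strictAnti_iff_eq_revPerm, strictAnti_iff_eq_revPerm, ← eq_mul_inv_iff_mul_eq, Equiv.swap_inv,
    hswap, Set.mem_insert_iff, Set.mem_singleton_iff]

lemma orderOf_swap_mul_revPerm :
    orderOf (Equiv.swap 0 1 * (Fin.revPerm : Equiv.Perm (Fin (n + 4)))) = 4 := by
  have hnodup : [0, 1, Fin.rev 0, Fin.rev (1 : Fin (n + 4))].Nodup := by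
    simp [Fin.ext_iff, Fin.val_rev]
  apply orderOf_mul_eq_four (swap_sq 0 1) revPerm_sq
  all_goals rw [← Equiv.swap_apply_apply, Fin.revPerm_apply, Fin.revPerm_apply]
  · exact (Equiv.Perm.disjoint_swap_swap hnodup).commute
  · intro h
    have hzero : Equiv.swap (Fin.rev 0) (Fin.rev 1) 0 = (1 : Fin (n + 4)) := by
      rw [h, Equiv.swap_apply_left]
    grind

end RevPerm

theorem avoid_123_132_213_231_dihedral4 (n : ℕ) (hn : 4 ≤ n) :
    avoidSet n ({⟨3, p123⟩, ⟨3, p132⟩, ⟨3, p213⟩, ⟨3, p231⟩} :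
        Set (Σ k : ℕ, Equiv.Perm (Fin k))) =
      ({Fin.revPerm,
        Equiv.swap (⟨0, by omega⟩ : Fin n) (⟨1, by omega⟩ : Fin n) * Fin.revPerm} :
        Set (Equiv.Perm (Fin n))) ∧
    orderOf (Equiv.swap (⟨0, by omega⟩ : Fin n) (⟨1, by omega⟩ : Fin n) *
      (Fin.revPerm : Equiv.Perm (Fin n))) = 4 ∧
    Nonempty (Subgroup.closure
      (avoidSet n ({⟨3, p123⟩, ⟨3, p132⟩, ⟨3, p213⟩, ⟨3, p231⟩} :
        Set (Σ k : ℕ, Equiv.Perm (Fin k)))) ≃* DihedralGroup 4) := by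
  obtain ⟨m, rfl⟩ := Nat.exists_eq_add_of_le' hn
  simp only [Fin.zero_eta, Fin.mk_one]
  have horder := orderOf_swap_mul_revPerm (n := m)
  refine ⟨avoidSet_123_132_213_231_eq, horder, ?_⟩
  rw [avoidSet_123_132_213_231_eq]
  exact nonempty_closure_mulEquiv_dihedralGroup_of_sq_eq_one (swap_sq 0 1) revPerm_sq
    (pow_ne_one_of_lt_orderOf two_ne_zero (by omega)) horder
end

section
/- For every n ≥ 3, the subgroup ⟨S_n({123, 231, 312, 1432})⟩ of S_n is isomorphic to the dihedral group D_n of order 2n. -/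
def p312 : Equiv.Perm (Fin 3) := (finRotate 3)⁻¹
/-- The pattern 1432. -/
def p1432 : Equiv.Perm (Fin 4) := Equiv.swap 1 3

/-!
The patterns 123, 231 and 312 are rotations of one another, so avoiding all three means that no
three entries of `π`, read from left to right, are in cyclically increasing order. If
`π (i + 1) ≠ π i - 1` modulo `n`, then the value `π i - 1` is taken at a position before `i` or
after `i + 1`, and together with `π i` and `π (i + 1)` it gives such a triple. Hence `π` descends by
one cyclically, that is, `π` is a reflection `x ↦ π 0 - x` of the `n`-gon. Conversely, the
reflections `n ⋯ 2 1` and `(n - 1) ⋯ 2 1 n` avoid all four patterns, and they generate the dihedral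
group because their product is a rotation by one step.
-/

open Equiv

section Patterns

variable {n : ℕ} {π : Perm (Fin n)} {a b c : Fin n}

theorem permContains_of_strictMono {k : ℕ} {τ : Perm (Fin k)} {f : Fin k → Fin n}
    (hf : StrictMono f) (hπ : StrictMono (π ∘ f ∘ τ.symm)) : PermContains τ π :=
  ⟨f, hf, fun a b => by simpa using (hπ.lt_iff_lt (a := τ a) (b := τ b)).symm⟩

theorem permContains_of_sbtw (hab : a < b) (hbc : b < c) (h : sbtw (π a) (π b) (π c)) :
    PermContains (1 : Perm (Fin 3)) π ∨ PermContains p231 π ∨ PermContains p312 π := by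
  have hf : StrictMono ![a, b, c] := by simp [hab, hbc]
  obtain ⟨h₁, h₂⟩ | ⟨h₁, h₂⟩ | ⟨h₁, h₂⟩ := Fin.sbtw_iff.1 h
  · have hword : π ∘ ![a, b, c] ∘ (1 : Perm (Fin 3)).symm = ![π a, π b, π c] := by
      ext x; fin_cases x <;> rfl
    exact .inl (permContains_of_strictMono hf (by simp [hword, h₁, h₂]))
  · have hword : π ∘ ![a, b, c] ∘ p312.symm = ![π b, π c, π a] := by
      ext x; fin_cases x <;> rfl
    exact .inr (.inr (permContains_of_strictMono hf (by simp [hword, h₁, h₂])))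
  · have hword : π ∘ ![a, b, c] ∘ p231.symm = ![π c, π a, π b] := by
      ext x; fin_cases x <;> rfl
    exact .inr (.inl (permContains_of_strictMono hf (by simp [hword, h₁, h₂])))

theorem not_sbtw_of_mem_avoidSet {T : Set (Σ k : ℕ, Perm (Fin k))}
    (hT : {⟨3, 1⟩, ⟨3, p231⟩, ⟨3, p312⟩} ⊆ T) (hπ : π ∈ avoidSet n T) (hab : a < b) (hbc : b < c) :
    ¬ sbtw (π a) (π b) (π c) := fun h => by
  obtain h | h | h := permContains_of_sbtw hab hbc h
  · exact hπ ⟨3, 1⟩ (hT (by simp)) h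
  · exact hπ ⟨3, p231⟩ (hT (by simp)) h
  · exact hπ ⟨3, p312⟩ (hT (by simp)) h

end Patterns

section Reflections

variable {n : ℕ}

theorem fin_sbtw_sub_one {x y : Fin (n + 1)} (hx : y ≠ x) (hx' : y ≠ x - 1) : sbtw x y (x - 1) := by
  simp only [Fin.sbtw_iff, Fin.lt_def, ne_eq, Fin.ext_iff, Fin.coe_sub_one, Fin.val_zero] at *
  split_ifs at * <;> omega

variable {π : Perm (Fin (n + 1))}

theorem apply_eq_sub_one_of_covBy
    (hπ : ∀ a b c, a < b → b < c → ¬ sbtw (π a) (π b) (π c)) {i j : Fin (n + 1)} (hij : i ⋖ j) :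
    π j = π i - 1 := by
  by_contra hne
  obtain ⟨k, hk⟩ := π.surjective (π i - 1)
  have hcyc : sbtw (π i) (π j) (π k) := hk ▸ fin_sbtw_sub_one (π.injective.ne hij.lt.ne') hne
  have hkj : k ≠ j := by
    rintro rfl
    exact hne hk
  obtain hki | rfl | hik := lt_trichotomy k i
  · exact hπ k i j hki hij.lt hcyc.cyclic_right
  · exact sbtw_irrefl_left_right hcyc
  · exact hπ i j k hij.lt ((hij.ge_of_gt hik).lt_of_ne' hkj) hcyc

theorem eq_subLeft_of_forall_not_sbtw
    (hπ : ∀ a b c, a < b → b < c → ¬ sbtw (π a) (π b) (π c)) : π = Equiv.subLeft (π 0) := by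
  ext1 x
  induction x using Fin.induction with
  | zero => simp
  | succ i ih =>
    have hcov : i.castSucc ⋖ i.succ := by simp
    rw [apply_eq_sub_one_of_covBy hπ hcov, ih, Equiv.subLeft_apply, Equiv.subLeft_apply,
      ← Fin.coeSucc_eq_succ, sub_sub]

end Reflections

section Ascents

variable {n : ℕ}

/-- Every ascent `π a < π b` of `π`, at not necessarily adjacent positions `a < b`, ends in the last
position with the largest value. For `2 ≤ n` this describes exactly the words `n ⋯ 2 1` and
`(n - 1) ⋯ 2 1 n`; stated through ascents, the property passes to every pattern of `π`. -/
def AscentsEndAtTop (π : Perm (Fin n)) : Prop :=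
  ∀ a b, a < b → π a < π b → ∀ c, c ≤ b ∧ π c ≤ π b

theorem AscentsEndAtTop.of_permContains {k : ℕ} {τ : Perm (Fin k)} {π : Perm (Fin n)}
    (hπ : AscentsEndAtTop π) (hτπ : PermContains τ π) : AscentsEndAtTop τ := by
  obtain ⟨f, hf, hτ⟩ := hτπ
  intro a b hab h c
  have htop := hπ (f a) (f b) (hf hab) ((hτ a b).1 h) (f c)
  exact ⟨hf.le_iff_le.1 htop.1, not_lt.1 fun hlt => htop.2.not_gt ((hτ b c).1 hlt)⟩

theorem AscentsEndAtTop.mem_avoidSet {π : Perm (Fin n)} (hπ : AscentsEndAtTop π)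
    {T : Set (Σ k : ℕ, Perm (Fin k))} (hT : ∀ τ ∈ T, ¬ AscentsEndAtTop τ.2) : π ∈ avoidSet n T :=
  fun τ hτ hτπ => hT τ hτ (hπ.of_permContains hτπ)

theorem fin_lt_of_sub_lt_sub_left {a b c : Fin n} (hab : a < b) (h : c - a < c - b) : c < b := by
  by_contra! hbc
  rw [Fin.lt_def, Fin.sub_val_of_le hbc, Fin.sub_val_of_le (hab.le.trans hbc)] at h
  omega

theorem ascentsEndAtTop_subLeft_last : AscentsEndAtTop (Equiv.subLeft (Fin.last n)) :=
  fun _ b hab h _ => absurd (fin_lt_of_sub_lt_sub_left hab h) (Fin.le_last b).not_gt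

theorem ascentsEndAtTop_subLeft_last_sub_one :
    AscentsEndAtTop (Equiv.subLeft (Fin.last n - 1)) := by
  intro a b hab h c
  have hb : b = Fin.last n := by
    have hlt : (Fin.last n - 1).val < b := fin_lt_of_sub_lt_sub_left hab h
    rw [Fin.coe_sub_one] at hlt
    grind
  have hlast : Fin.last n - 1 - Fin.last n = Fin.last n := by
    rw [sub_sub_cancel_left, neg_eq_iff_eq_neg, Fin.neg_last]
  rw [hb, Equiv.subLeft_apply _ (Fin.last n), hlast]
  exact ⟨Fin.le_last _, Fin.le_last _⟩

end Ascents

section Dihedral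

variable {n : ℕ} {A : Type*} [AddCommGroup A]

/-- The dihedral group acting on an abelian group `A` through `f : ZMod n →+ A`, where `r i` is the
translation `x ↦ x - f i` and `sr i` is the reflection `x ↦ f i - x`. The translations carry a minus
sign to match the convention `r i * sr j = sr (j - i)` of `DihedralGroup`. -/
def dihedralPerm (f : ZMod n →+ A) : DihedralGroup n →* Perm A where
  toFun
    | .r i => Equiv.subRight (f i)
    | .sr i => Equiv.subLeft (f i)
  map_one' := by
    change Equiv.subRight (f 0) = 1
    ext x
    simp
  map_mul' := by
    rintro (i | i) (j | j) <;> ext x <;> simp <;> abel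

@[simp]
theorem dihedralPerm_r (f : ZMod n →+ A) (i : ZMod n) :
    dihedralPerm f (.r i) = Equiv.subRight (f i) := rfl

@[simp]
theorem dihedralPerm_sr (f : ZMod n →+ A) (i : ZMod n) :
    dihedralPerm f (.sr i) = Equiv.subLeft (f i) := rfl

theorem dihedralPerm_injective (hn : 2 < n) {f : ZMod n →+ A} (hf : Function.Injective f) :
    Function.Injective (dihedralPerm f) := by
  rw [injective_iff_map_eq_one]
  rintro (i | i) h
  · have hi : f i = 0 := by simpa using Equiv.congr_fun h 0
    rw [(map_eq_zero_iff f hf).1 hi, DihedralGroup.r_zero]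
  · have hi : f i = 0 := by simpa using Equiv.congr_fun h 0
    have h1 : f (-1) = f 1 := by simpa [hi] using Equiv.congr_fun h (f 1)
    have : Fact (2 < n) := ⟨hn⟩
    exact absurd (hf h1) ZMod.neg_one_ne_one

theorem closure_sr_sr_add_one (i : ZMod n) :
    Subgroup.closure {DihedralGroup.sr i, DihedralGroup.sr (i + 1)} = ⊤ := by
  set K := Subgroup.closure {DihedralGroup.sr i, DihedralGroup.sr (i + 1)}
  have hi : .sr i ∈ K := Subgroup.subset_closure (by simp)
  have hi' : .sr (i + 1) ∈ K := Subgroup.subset_closure (by simp)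
  have hr (j : ZMod n) : .r j ∈ K := by
    obtain ⟨k, rfl⟩ := ZMod.intCast_surjective j
    simpa using K.zpow_mem (K.mul_mem hi hi') k
  rw [Subgroup.eq_top_iff']
  rintro (j | j)
  · exact hr j
  · simpa using K.mul_mem hi (hr (j - i))

end Dihedral

/-- The dihedral group acting on the vertices `Fin (n + 1)` of the regular `(n + 1)`-gon. -/
abbrev polygonPerm (n : ℕ) : DihedralGroup (n + 1) →* Perm (Fin (n + 1)) :=
  dihedralPerm ((ZMod.finEquiv (n + 1)).symm : ZMod (n + 1) →+ Fin (n + 1))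

theorem subLeft_mem_range_polygonPerm {n : ℕ} (c : Fin (n + 1)) :
    Equiv.subLeft c ∈ (polygonPerm n).range :=
  ⟨.sr (ZMod.finEquiv (n + 1) c), by simp⟩

theorem range_polygonPerm_eq_closure {n : ℕ} (c : Fin (n + 1)) :
    (polygonPerm n).range = Subgroup.closure {Equiv.subLeft (c - 1), Equiv.subLeft c} := by
  rw [MonoidHom.range_eq_map, ← closure_sr_sr_add_one (ZMod.finEquiv (n + 1) (c - 1)),
    MonoidHom.map_closure, Set.image_pair]
  simp

theorem closure_avoidSet_eq_range_polygonPerm {n : ℕ} {T : Set (Σ k : ℕ, Perm (Fin k))}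
    (hcyclic : {⟨3, 1⟩, ⟨3, p231⟩, ⟨3, p312⟩} ⊆ T) (hT : ∀ τ ∈ T, ¬ AscentsEndAtTop τ.2) :
    Subgroup.closure (avoidSet (n + 1) T) = (polygonPerm n).range := by
  apply le_antisymm
  · rw [Subgroup.closure_le]
    intro π hπ
    rw [eq_subLeft_of_forall_not_sbtw fun _ _ _ => not_sbtw_of_mem_avoidSet hcyclic hπ]
    exact subLeft_mem_range_polygonPerm (π 0)
  · rw [range_polygonPerm_eq_closure (Fin.last n)]
    exact Subgroup.closure_mono (Set.pair_subset
      (ascentsEndAtTop_subLeft_last_sub_one.mem_avoidSet hT)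
      (ascentsEndAtTop_subLeft_last.mem_avoidSet hT))

theorem closure_avoid_123_231_312_1432_dihedral_general {n : ℕ} (hn : 3 ≤ n)
    {T : Set (Σ k : ℕ, Perm (Fin k))} (hcyclic : {⟨3, 1⟩, ⟨3, p231⟩, ⟨3, p312⟩} ⊆ T)
    (hT : ∀ τ ∈ T, ¬ AscentsEndAtTop τ.2) :
    Nonempty (Subgroup.closure (avoidSet n T) ≃* DihedralGroup n) := by
  obtain ⟨m, rfl⟩ : ∃ m, n = m + 1 := ⟨n - 1, by omega⟩
  have hinj : Function.Injective (polygonPerm m) :=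
    dihedralPerm_injective hn (ZMod.finEquiv (m + 1)).symm.injective
  rw [closure_avoidSet_eq_range_polygonPerm hcyclic hT]
  exact ⟨(MonoidHom.ofInjective hinj).symm⟩

theorem closure_avoid_123_231_312_1432_dihedral (n : ℕ) (hn : 3 ≤ n) :
    Nonempty (Subgroup.closure
      (avoidSet n ({⟨3, (1 : Equiv.Perm (Fin 3))⟩, ⟨3, p231⟩, ⟨3, p312⟩, ⟨4, p1432⟩} :
        Set (Σ k : ℕ, Equiv.Perm (Fin k)))) ≃* DihedralGroup n) := by
  refine closure_avoid_123_231_312_1432_dihedral_general hn (by simp [Set.insert_subset_iff]) ?_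
  rintro τ (rfl | rfl | rfl | rfl) <;> unfold AscentsEndAtTop <;> decide
end
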